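/- Let n ≥ 2 and 1 ≤ r < n be integers and let h be a homeomorphism of the Cantor space 𝔠_{n,r}. Then h⁻¹ G_{n,r} h = G_{n,r} (i.e., conjugation by h induces an automorphism of the Higman–Thompson group G_{n,r}) if and only if there exists m ∈ ℕ such that for every w ∈ List (Fin n) of length m and all words ν, η ∈ W_{n,r}, the homeomorphism h acts in the same fashion on U_{ν⌢w} and U_{η⌢w}, and h⁻¹ acts in the same fashion on U_{ν⌢w} and U_{η⌢w}. (This is the bi-synchronizing characterisation of Aut(G_{n,r}).) -/

import Mathlib

open Set

namespace HigmanAut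

/-- The one-sided infinite sequence space `𝔠_n` on `n` letters. -/
abbrev Cn (n : ℕ) : Type := ℕ → Fin n

/-- The Cantor space `𝔠_{n,r} = Fin r × (ℕ → Fin n)` (with the product topology,
`Fin r` and `Fin n` discrete). -/
abbrev CNR (n r : ℕ) : Type := Fin r × Cn n

/-- A word: a letter from `Fin r` together with a finite list over `Fin n`. -/
abbrev Word (n r : ℕ) : Type := Fin r × List (Fin n)

/-- Self-homeomorphisms of `𝔠_{n,r}`. -/
abbrev Homeo (n r : ℕ) : Type := CNR n r ≃ₜ CNR n r

/-- Append a finite list to a word: `ν⌢w`. -/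
def wApp {n r : ℕ} (ν : Word n r) (w : List (Fin n)) : Word n r := (ν.1, ν.2 ++ w)

/-- The point `ν⌢x` of `𝔠_{n,r}` determined by a word `ν` followed by `x ∈ 𝔠_n`. -/
def wCat {n r : ℕ} (ν : Word n r) (x : Cn n) : CNR n r :=
  (ν.1, fun i => if h : i < ν.2.length then ν.2.get ⟨i, h⟩ else x (i - ν.2.length))

/-- The cone `U_ν` of a word `ν`. -/
def cone {n r : ℕ} (ν : Word n r) : Set (CNR n r) :=
  {p | p.1 = ν.1 ∧ ∀ (i : ℕ) (h : i < ν.2.length), p.2 i = ν.2.get ⟨i, h⟩}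

/-- Membership in the Higman--Thompson group `G_{n,r}`: `g` is a prefix code map,
i.e. there are `k ≥ 1` and words `ν i`, `η i` whose cones partition `𝔠_{n,r}`
with `g(ν i ⌢ x) = η i ⌢ x` for all `i`, `x`. -/
def IsHigman {n r : ℕ} (g : Homeo n r) : Prop :=
  ∃ k : ℕ, 0 < k ∧ ∃ ν η : Fin k → Word n r,
    (∀ p : CNR n r, ∃! i : Fin k, p ∈ cone (ν i)) ∧
    (∀ p : CNR n r, ∃! i : Fin k, p ∈ cone (η i)) ∧
    (∀ (i : Fin k) (x : Cn n), g (wCat (ν i) x) = wCat (η i) x)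

/-- The Higman--Thompson group `G_{n,r}` as a set of homeomorphisms. -/
def higmanSet (n r : ℕ) : Set (Homeo n r) := {g | IsHigman g}

/-- Conjugation: in the paper's right-action notation this is `g ↦ h⁻¹ g h`
(as a left function, `x ↦ h (g (h⁻¹ x))`). -/
def conjH {n r : ℕ} (h g : Homeo n r) : Homeo n r := (h.symm.trans g).trans h

/-- `h` acts in the same fashion on `U_α` and `U_β`: there are words `α'`, `β'`
and a common local action `f` with `h(α⌢x) = α'⌢f(x)` and `h(β⌢x) = β'⌢f(x)`. -/
def SameFashion {n r : ℕ} (h : Homeo n r) (α β : Word n r) : Prop :=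
  ∃ (α' β' : Word n r) (f : Cn n → Cn n),
    (∀ x : Cn n, h (wCat α x) = wCat α' (f x)) ∧
    (∀ x : Cn n, h (wCat β x) = wCat β' (f x))

/-- Tail equivalence on `𝔠_{n,r}`. -/
def TailEq {n r : ℕ} (x y : CNR n r) : Prop :=
  ∃ (ν η : Word n r) (z : Cn n), x = wCat ν z ∧ y = wCat η z

/-- `h` is pointwise canonical. -/
def PtwiseCanonical {n r : ℕ} (h : Homeo n r) : Prop :=
  ∀ x : CNR n r, ∃ (η₁ η₂ : Word n r) (y : Cn n), x = wCat η₁ y ∧ h x = wCat η₂ y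

/-- `h` is densely canonical. -/
def DenselyCanonical {n r : ℕ} (h : Homeo n r) : Prop :=
  ∀ U : Set (CNR n r), IsOpen U → U.Nonempty →
    ∃ η ζ : Word n r, cone η ⊆ U ∧ ∀ x : Cn n, h (wCat η x) = wCat ζ x

/-- `h` belongs to `H_{n,r,∼}`: `x ∼ y` iff `h(x) ∼ h(y)`. -/
def PreservesTailEq {n r : ℕ} (h : Homeo n r) : Prop :=
  ∀ x y : CNR n r, TailEq x y ↔ TailEq (h x) (h y)

/-- `ν` is a prefix of `η`, i.e. `U_η ⊆ U_ν`. -/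
def WPrefix {n r : ℕ} (ν η : Word n r) : Prop := cone η ⊆ cone ν

/-- Two words are incomparable if neither is a prefix of the other. -/
def Incomp {n r : ℕ} (ν η : Word n r) : Prop := ¬ WPrefix ν η ∧ ¬ WPrefix η ν

/-! ### Basic facts on concatenation and cones -/

/-- Prepend a finite list to an infinite sequence. -/
def lcat {n : ℕ} (w : List (Fin n)) (x : Cn n) : Cn n :=
  fun i => if h : i < w.length then w.get ⟨i, h⟩ else x (i - w.length)

/-- Drop the first `k` letters of a sequence. -/
def sdrop {n : ℕ} (k : ℕ) (x : Cn n) : Cn n := fun i => x (i + k)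

/-- The first `k` letters of a sequence. -/
def stake {n : ℕ} (k : ℕ) (x : Cn n) : List (Fin n) := List.ofFn (fun i : Fin k => x i)

lemma wCat_eq {n r : ℕ} (ν : Word n r) (x : Cn n) : wCat ν x = (ν.1, lcat ν.2 x) := rfl

lemma lcat_append {n : ℕ} (u w : List (Fin n)) (x : Cn n) :
    lcat (u ++ w) x = lcat u (lcat w x) := by
  funext i
  simp only [lcat, List.get_eq_getElem, List.length_append]
  by_cases h1 : i < u.length
  · have h2 : i < u.length + w.length := by omega
    simp [h1, h2, List.getElem_append_left]
  · by_cases h2 : i < u.length + w.length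
    · have h3 : i - u.length < w.length := by omega
      simp [h1, h2, h3, List.getElem_append_right (not_lt.1 h1)]
    · have h3 : ¬ i - u.length < w.length := by omega
      simp [h1, h2, h3, Nat.sub_sub]

lemma wCat_wApp {n r : ℕ} (ν : Word n r) (w : List (Fin n)) (x : Cn n) :
    wCat (wApp ν w) x = wCat ν (lcat w x) := by
  simp [wCat_eq, wApp, lcat_append]

lemma wApp_wApp {n r : ℕ} (ν : Word n r) (u w : List (Fin n)) :
    wApp (wApp ν u) w = wApp ν (u ++ w) := by
  simp [wApp]

lemma sdrop_lcat {n : ℕ} (w : List (Fin n)) (x : Cn n) : sdrop w.length (lcat w x) = x := by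
  funext i
  simp [sdrop, lcat]

lemma lcat_inj {n : ℕ} {w : List (Fin n)} {x y : Cn n} (h : lcat w x = lcat w y) : x = y := by
  rw [← sdrop_lcat w x, h, sdrop_lcat]

lemma wCat_inj {n r : ℕ} {ν : Word n r} {x y : Cn n} (h : wCat ν x = wCat ν y) : x = y :=
  lcat_inj (congrArg Prod.snd h)

lemma stake_length {n : ℕ} (k : ℕ) (x : Cn n) : (stake k x).length = k := by simp [stake]

lemma lcat_stake {n : ℕ} (k : ℕ) (x : Cn n) : lcat (stake k x) (sdrop k x) = x := by
  funext i
  simp only [lcat, stake, sdrop, List.length_ofFn, List.get_eq_getElem, List.getElem_ofFn]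
  split_ifs with h
  · rfl
  · congr 1; omega

lemma wCat_mem {n r : ℕ} (ν : Word n r) (x : Cn n) : wCat ν x ∈ cone ν := by
  refine ⟨rfl, fun i h => ?_⟩
  simp [wCat, h]

lemma eq_wCat {n r : ℕ} {ν : Word n r} {p : CNR n r} (h : p ∈ cone ν) :
    p = wCat ν (sdrop ν.2.length p.2) := by
  refine Prod.ext h.1 ?_
  funext i
  simp only [wCat, sdrop]
  split_ifs with hi
  · exact h.2 i hi
  · rw [Nat.sub_add_cancel (not_lt.1 hi)]

lemma lcat_cmp {n : ℕ} (u v : List (Fin n)) (x y : Cn n) (h : lcat u x = lcat v y)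
    (hl : u.length ≤ v.length) : ∃ w, v = u ++ w ∧ x = lcat w y := by
  have hp : u <+: v := by
    rw [List.prefix_iff_eq_take]
    apply List.ext_getElem
    · simp [hl]
    · intro i h1 h2
      have := congrFun h i
      have h3 : i < v.length := by omega
      simp only [lcat, h1, h3, dif_pos, List.get_eq_getElem] at this
      simp [this]
  obtain ⟨w, rfl⟩ := hp
  refine ⟨w, rfl, ?_⟩
  rw [lcat_append] at h
  exact lcat_inj h

lemma wCat_cmp {n r : ℕ} (ν η : Word n r) (x y : Cn n) (h : wCat ν x = wCat η y)
    (hl : ν.2.length ≤ η.2.length) : ∃ w, η = wApp ν w ∧ x = lcat w y := by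
  obtain ⟨w, h1, h2⟩ := lcat_cmp ν.2 η.2 x y (congrArg Prod.snd h) hl
  have h3 : ν.1 = η.1 := congrArg (fun p : CNR n r => p.1) h
  exact ⟨w, Prod.ext h3.symm h1, h2⟩

lemma wApp_mem {n r : ℕ} {ν : Word n r} {w : List (Fin n)} {p : CNR n r}
    (h : p ∈ cone (wApp ν w)) : p ∈ cone ν := by
  rw [eq_wCat h, wCat_wApp]
  exact wCat_mem _ _

lemma cone_isClopen {n r : ℕ} (ν : Word n r) : IsClopen (cone ν) := by
  have : cone ν = (fun p : CNR n r => p.1) ⁻¹' {ν.1} ∩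
      ⋂ i : Fin ν.2.length, (fun p : CNR n r => p.2 i) ⁻¹' {ν.2.get i} := by
    ext p
    simp only [cone, mem_ofPred_eq, mem_inter_iff, mem_preimage, mem_singleton_iff, mem_iInter]
    exact and_congr_right fun _ => ⟨fun h i => h i i.2, fun h i hi => h ⟨i, hi⟩⟩
  rw [this]
  refine IsClopen.inter ((isClopen_discrete _).preimage continuous_fst) ?_
  refine isClopen_iInter_of_finite fun i => (isClopen_discrete _).preimage ?_
  fun_prop

lemma continuous_wCat {n r : ℕ} (ν : Word n r) : Continuous (wCat ν : Cn n → CNR n r) := by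
  refine continuous_const.prodMk (continuous_pi fun i => ?_)
  by_cases h : i < ν.2.length
  · simp only [h, dif_pos]; exact continuous_const
  · simp only [h, dif_neg, not_false_eq_true]; fun_prop

lemma continuous_sdrop {n : ℕ} (k : ℕ) : Continuous (sdrop k : Cn n → Cn n) :=
  continuous_pi fun i => continuous_apply (i + k)

/-- The cones form a neighbourhood basis. -/
lemma exists_cone {n r : ℕ} (U : Set (CNR n r)) (hU : IsOpen U) (p : CNR n r) (hp : p ∈ U)
    (ν : Word n r) (hν : p ∈ cone ν) :
    ∃ u, p ∈ cone (wApp ν u) ∧ cone (wApp ν u) ⊆ U := by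
  obtain ⟨A, B, -, hB, hpA, hpB, hAB⟩ := isOpen_prod_iff.1 hU p.1 p.2 hp
  obtain ⟨I, u, hu, hIB⟩ := isOpen_pi_iff.1 hB p.2 hpB
  set N := I.sup id + 1 with hN
  have key : ∀ q : CNR n r, q.1 = p.1 → (∀ i < N, q.2 i = p.2 i) → q ∈ U := by
    intro q h1 h2
    refine hAB ⟨by rw [h1]; exact hpA, hIB fun i hi => ?_⟩
    have : i ≤ I.sup id := Finset.le_sup (f := id) hi
    rw [h2 i (by omega)]
    exact (hu i hi).2
  refine ⟨stake N (sdrop ν.2.length p.2), ?_, ?_⟩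
  · have h1 := eq_wCat hν
    rw [← lcat_stake N (sdrop ν.2.length p.2), ← wCat_wApp] at h1
    rw [h1]
    rw [← h1]
    rw [h1]
    convert wCat_mem _ _ using 3
    rw [← h1]
  · intro q hq
    have h1 := eq_wCat hq
    have h2 := eq_wCat hν
    rw [← lcat_stake N (sdrop ν.2.length p.2), ← wCat_wApp] at h2
    refine key q (hq.1.trans hν.1.symm) fun i hi => ?_
    rw [h1, h2]
    have hlen : i < (wApp ν (stake N (sdrop ν.2.length p.2))).2.length := by
      simp [wApp, stake_length]; omega
    rw [← h2]
    rw [← h1, hq.2 i hlen]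
    have h3 := congrFun (congrArg Prod.snd h2) i
    rw [h3]
    simp [wCat, hlen]

/-- A Lebesgue-number lemma for cones. -/
lemma lebesgue {n r : ℕ} (hn : 0 < n) (P : Word n r → Prop)
    (hP : ∀ ν u, P ν → P (wApp ν u)) (hc : ∀ p, ∃ ν, p ∈ cone ν ∧ P ν) :
    ∃ N, ∀ ν : Word n r, N ≤ ν.2.length → P ν := by
  choose F hF hPF using hc
  obtain ⟨t, ht⟩ := isCompact_univ.elim_finite_subcover (fun p => cone (F p))
    (fun p => (cone_isClopen _).isOpen) (fun p _ => mem_iUnion.2 ⟨p, hF p⟩)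
  refine ⟨t.sup fun p => (F p).2.length, fun ν hν => ?_⟩
  have := ht (mem_univ (wCat ν fun _ => ⟨0, hn⟩))
  simp only [mem_iUnion] at this
  obtain ⟨p, hpt, hp⟩ := this
  have hle : (F p).2.length ≤ ν.2.length :=
    (Finset.le_sup (f := fun p => (F p).2.length) hpt).trans hν
  obtain ⟨w, hw, -⟩ := wCat_cmp (F p) ν _ _ (eq_wCat hp).symm hle
  rw [hw]
  exact hP _ _ (hPF p)

/-! ### Locally prefix-replacing maps -/

/-- `g` is near every point a prefix replacement. -/
def LocPre {n r : ℕ} (g : CNR n r → CNR n r) : Prop :=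
  ∀ p, ∃ ν, p ∈ cone ν ∧ ∃ η, ∀ x, g (wCat ν x) = wCat η x

lemma LocPre.continuous {n r : ℕ} {g : CNR n r → CNR n r} (hg : LocPre g) : Continuous g := by
  rw [continuous_iff_continuousAt]
  intro p
  obtain ⟨ν, hp, η, hη⟩ := hg p
  have h1 : Continuous fun q : CNR n r => wCat η (sdrop ν.2.length q.2) :=
    (continuous_wCat η).comp ((continuous_sdrop _).comp continuous_snd)
  refine h1.continuousAt.congr ?_
  filter_upwards [(cone_isClopen ν).isOpen.mem_nhds hp] with q hq
  rw [← hη, ← eq_wCat hq]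

lemma IsHigman.locPre {n r : ℕ} {g : Homeo n r} (hg : IsHigman g) : LocPre g := by
  obtain ⟨k, -, ν, η, h1, -, h3⟩ := hg
  intro p
  obtain ⟨i, hi, -⟩ := h1 p
  exact ⟨ν i, hi, η i, h3 i⟩

lemma LocPre.isHigman {n r : ℕ} (hn : 0 < n) (hr : 0 < r) {g : Homeo n r} (hg : LocPre g) :
    IsHigman g := by
  obtain ⟨N, hN⟩ := lebesgue hn (fun ν => ∃ η, ∀ x, g (wCat ν x) = wCat η x)
    (by
      rintro ν u ⟨η, h⟩
      exact ⟨wApp η u, fun x => by rw [wCat_wApp, h, wCat_wApp]⟩) hg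
  let T := Fin r × (Fin N → Fin n)
  let e : Fin (Fintype.card T) ≃ T := (Fintype.equivFin T).symm
  let ν : Fin (Fintype.card T) → Word n r := fun i => ((e i).1, List.ofFn (e i).2)
  have hν : ∀ i, ∃ η, ∀ x, g (wCat (ν i) x) = wCat η x := fun i => hN _ (by simp [ν])
  choose η hη using hν
  have hpart : ∀ p : CNR n r, ∃! i, p ∈ cone (ν i) := by
    intro p
    have hmem : ∀ i, p ∈ cone (ν i) ↔ e i = (p.1, fun j : Fin N => p.2 j) := by
      intro i
      simp only [cone, ν, mem_ofPred_eq, List.length_ofFn, List.get_eq_getElem, List.getElem_ofFn]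
      constructor
      · rintro ⟨h1, h2⟩
        exact Prod.ext h1.symm (funext fun j => (h2 j j.2).symm)
      · intro h
        refine ⟨by rw [h], fun j hj => ?_⟩
        exact (congrFun (congrArg Prod.snd h) ⟨j, hj⟩).symm
    refine ⟨e.symm (p.1, fun j : Fin N => p.2 j), ?_, ?_⟩
    · simp only [hmem, Equiv.apply_symm_apply]
    · intro i hi
      rw [Equiv.eq_symm_apply]
      exact (hmem i).1 hi
  have hiff : ∀ i p, p ∈ cone (η i) ↔ g.symm p ∈ cone (ν i) := by
    intro i p
    constructor
    · intro hp
      rw [eq_wCat hp, ← hη, Homeomorph.symm_apply_apply]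
      exact wCat_mem _ _
    · intro hp
      have := congrArg g (eq_wCat hp)
      rw [hη, Homeomorph.apply_symm_apply] at this
      rw [this]
      exact wCat_mem _ _
  refine ⟨Fintype.card T, ?_, ν, η, hpart, ?_, hη⟩
  · have : Nonempty T := ⟨(⟨0, hr⟩, fun _ => ⟨0, hn⟩)⟩
    exact Fintype.card_pos
  · intro p
    simp only [hiff]
    exact hpart (g.symm p)

open Classical in
/-- The map swapping two cones. -/
noncomputable def swapFun {n r : ℕ} (ν η : Word n r) (p : CNR n r) : CNR n r :=
  if p ∈ cone ν then wCat η (sdrop ν.2.length p.2)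
  else if p ∈ cone η then wCat ν (sdrop η.2.length p.2) else p

lemma swapFun_left {n r : ℕ} (ν η : Word n r) (x : Cn n) :
    swapFun ν η (wCat ν x) = wCat η x := by
  rw [swapFun, if_pos (wCat_mem _ _)]
  exact congrArg _ (sdrop_lcat _ _)

lemma swapFun_right {n r : ℕ} (ν η : Word n r) (hd : Disjoint (cone ν) (cone η)) (x : Cn n) :
    swapFun ν η (wCat η x) = wCat ν x := by
  rw [swapFun, if_neg (fun h => Set.disjoint_left.1 hd h (wCat_mem _ _)), if_pos (wCat_mem _ _)]
  exact congrArg _ (sdrop_lcat _ _)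

lemma swapFun_invol {n r : ℕ} (ν η : Word n r) (hd : Disjoint (cone ν) (cone η)) (p : CNR n r) :
    swapFun ν η (swapFun ν η p) = p := by
  by_cases h1 : p ∈ cone ν
  · rw [eq_wCat h1, swapFun_left, swapFun_right _ _ hd]
  · by_cases h2 : p ∈ cone η
    · rw [eq_wCat h2, swapFun_right _ _ hd, swapFun_left]
    · have : swapFun ν η p = p := by rw [swapFun, if_neg h1, if_neg h2]
      rw [this, this]

lemma swapFun_locPre {n r : ℕ} (ν η : Word n r) (hd : Disjoint (cone ν) (cone η)) :
    LocPre (swapFun ν η) := by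
  intro p
  by_cases h1 : p ∈ cone ν
  · exact ⟨ν, h1, η, swapFun_left ν η⟩
  · by_cases h2 : p ∈ cone η
    · exact ⟨η, h2, ν, swapFun_right ν η hd⟩
    · obtain ⟨u, hu, hsub⟩ := exists_cone ((cone ν)ᶜ ∩ (cone η)ᶜ)
        ((cone_isClopen ν).compl.isOpen.inter (cone_isClopen η).compl.isOpen) p ⟨h1, h2⟩
        (p.1, []) ⟨rfl, fun i h => absurd h (by simp)⟩
      refine ⟨_, hu, wApp (p.1, []) u, fun x => ?_⟩
      have := hsub (wCat_mem (wApp (p.1, []) u) x)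
      rw [swapFun, if_neg this.1, if_neg this.2]

lemma exists_swap {n r : ℕ} (hn : 0 < n) (hr : 0 < r) (ν η : Word n r)
    (hd : Disjoint (cone ν) (cone η)) :
    ∃ g : Homeo n r, IsHigman g ∧ ∀ x, g (wCat ν x) = wCat η x := by
  let g : Homeo n r :=
    { toFun := swapFun ν η
      invFun := swapFun ν η
      left_inv := swapFun_invol ν η hd
      right_inv := swapFun_invol ν η hd
      continuous_toFun := (swapFun_locPre ν η hd).continuous
      continuous_invFun := (swapFun_locPre ν η hd).continuous }
  have hg : LocPre g := swapFun_locPre ν η hd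
  exact ⟨g, hg.isHigman hn hr, swapFun_left ν η⟩

/-! ### Synchronizing maps -/

lemma SameFashion.symm {n r : ℕ} {h : Homeo n r} {α β : Word n r} (H : SameFashion h α β) :
    SameFashion h β α := by
  obtain ⟨a, b, f, h1, h2⟩ := H
  exact ⟨b, a, f, h2, h1⟩

lemma SameFashion.trans {n r : ℕ} (hn : 0 < n) {h : Homeo n r} {α β γ : Word n r}
    (H : SameFashion h α β) (K : SameFashion h β γ) : SameFashion h α γ := by
  obtain ⟨a, b, f, h1, h2⟩ := H
  obtain ⟨b', c, g, k1, k2⟩ := K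
  have hx : ∀ x, wCat b (f x) = wCat b' (g x) := fun x => (h2 x).symm.trans (k1 x)
  let x0 : Cn n := fun _ => ⟨0, hn⟩
  rcases le_total b.2.length b'.2.length with hl | hl
  · obtain ⟨u, rfl, -⟩ := wCat_cmp b b' _ _ (hx x0) hl
    refine ⟨wApp a u, c, g, fun x => ?_, k2⟩
    have := hx x
    rw [wCat_wApp] at this
    rw [h1, wCat_wApp, wCat_inj this]
  · obtain ⟨u, rfl, -⟩ := wCat_cmp b' b _ _ (hx x0).symm hl
    refine ⟨a, wApp c u, f, h1, fun x => ?_⟩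
    have := hx x
    rw [wCat_wApp] at this
    rw [k2, wCat_wApp, wCat_inj this]

/-- One-sided synchronization at level `m`. -/
def SyncAt {n r : ℕ} (h : Homeo n r) (m : ℕ) : Prop :=
  ∀ w : List (Fin n), w.length = m → ∀ ν η : Word n r, SameFashion h (wApp ν w) (wApp η w)

/-- `h` eventually acts in the same fashion below `ν` and below `η`. -/
def Ev {n r : ℕ} (h : Homeo n r) (M : ℕ) (ν η : Word n r) : Prop :=
  ∀ w : List (Fin n), M ≤ w.length → SameFashion h (wApp ν w) (wApp η w)

lemma SyncAt.conj {n r : ℕ} (hn : 0 < n) (hr : 0 < r) {h : Homeo n r} {m : ℕ} (hs : SyncAt h m)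
    {g : Homeo n r} (hg : IsHigman g) : IsHigman (conjH h g) := by
  refine LocPre.isHigman hn hr fun p => ?_
  obtain ⟨ν, hq, η, hη⟩ := hg.locPre (h.symm p)
  set z := sdrop ν.2.length (h.symm p).2 with hz
  have hq' := eq_wCat hq
  rw [← hz, ← lcat_stake m z, ← wCat_wApp] at hq'
  set w := stake m z with hw
  obtain ⟨α, β, f, h1, h2⟩ := hs w (stake_length m z) ν η
  have hp : p = wCat α (f (sdrop m z)) := by
    rw [← h1, ← hq', Homeomorph.apply_symm_apply]
  have hopen : IsOpen (h '' cone (wApp ν w)) :=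
    h.isOpenMap _ (cone_isClopen _).isOpen
  have hpi : p ∈ h '' cone (wApp ν w) := ⟨h.symm p, by rw [hq']; exact wCat_mem _ _, by simp⟩
  obtain ⟨u, hu, hsub⟩ := exists_cone _ hopen p hpi α (by rw [hp]; exact wCat_mem _ _)
  refine ⟨wApp α u, hu, wApp β u, fun y => ?_⟩
  obtain ⟨q, hqc, hqe⟩ := hsub (wCat_mem (wApp α u) y)
  have hqx := eq_wCat hqc
  set x := sdrop (wApp ν w).2.length q.2
  rw [← hqe]
  have hfx : f x = lcat u y := by
    rw [hqx, h1, wCat_wApp] at hqe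
    exact wCat_inj hqe
  change h (g (h.symm (h q))) = _
  rw [Homeomorph.symm_apply_apply, hqx, wCat_wApp, hη, ← wCat_wApp, h2, hfx, wCat_wApp]

lemma ev_of_disjoint {n r : ℕ} (hn : 0 < n) (hr : 0 < r) {h : Homeo n r}
    (hc : ∀ g, IsHigman g → IsHigman (conjH h g)) (ν η : Word n r)
    (hd : Disjoint (cone ν) (cone η)) : ∃ M, Ev h M ν η := by
  obtain ⟨g, hg, hgν⟩ := exists_swap hn hr ν η hd
  have hk := (hc g hg).locPre
  obtain ⟨N, hN⟩ := lebesgue hn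
    (fun μ => ∃ α β, (∀ x, h (wCat μ x) ∈ cone α) ∧ ∀ y, conjH h g (wCat α y) = wCat β y)
    (by
      rintro μ u ⟨α, β, h1, h2⟩
      exact ⟨α, β, fun x => by rw [wCat_wApp]; exact h1 _, h2⟩)
    (by
      intro p
      obtain ⟨α, hα, β, hβ⟩ := hk (h p)
      obtain ⟨u, hu, hsub⟩ := exists_cone (h ⁻¹' cone α)
        ((cone_isClopen α).isOpen.preimage h.continuous) p hα
        (p.1, []) ⟨rfl, fun i h => absurd h (by simp)⟩
      exact ⟨_, hu, α, β, fun x => hsub (wCat_mem _ x), hβ⟩)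
  refine ⟨N, fun w hw => ?_⟩
  obtain ⟨α, β, h1, h2⟩ := hN (wApp ν w) (by simp [wApp]; omega)
  refine ⟨α, β, fun x => sdrop α.2.length (h (wCat (wApp ν w) x)).2, fun x => eq_wCat (h1 x),
    fun x => ?_⟩
  rw [← h2, ← eq_wCat (h1 x)]
  change _ = h (g (h.symm (h _)))
  rw [Homeomorph.symm_apply_apply, wCat_wApp ν, hgν, ← wCat_wApp]

lemma Ev.mono {n r : ℕ} {h : Homeo n r} {M M' : ℕ} {ν η : Word n r} (H : Ev h M ν η)
    (hM : M ≤ M') : Ev h M' ν η := fun w hw => H w (hM.trans hw)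

lemma ev_trans {n r : ℕ} (hn : 0 < n) {h : Homeo n r} {ν η ζ : Word n r}
    (H : ∃ M, Ev h M ν η) (K : ∃ M, Ev h M η ζ) : ∃ M, Ev h M ν ζ := by
  obtain ⟨M, H⟩ := H
  obtain ⟨M', K⟩ := K
  exact ⟨max M M', fun w hw =>
    (H w (le_of_max_le_left hw)).trans hn (K w (le_of_max_le_right hw))⟩

lemma disjoint_cones {n r : ℕ} (c c' : Fin r) (a a' : Fin n) (u u' : List (Fin n))
    (hne : (c, a) ≠ (c', a')) :
    Disjoint (cone ((c, a :: u) : Word n r)) (cone ((c', a' :: u') : Word n r)) := by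
  rw [Set.disjoint_left]
  rintro p ⟨h1, h2⟩ ⟨h3, h4⟩
  apply hne
  have e1 := h2 0 (by simp)
  have e2 := h4 0 (by simp)
  simp at e1 e2 h1 h3
  rw [← h1, ← h3, ← e1, ← e2]

lemma exists_sync {n r : ℕ} (hn : 2 ≤ n) (hr : 0 < r) {h : Homeo n r}
    (hc : ∀ g, IsHigman g → IsHigman (conjH h g)) : ∃ m, SyncAt h m := by
  have hn0 : 0 < n := by omega
  let c0 : Fin r := ⟨0, hr⟩
  let a0 : Fin n := ⟨0, hn0⟩
  let a1 : Fin n := ⟨1, by omega⟩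
  have h01 : a1 ≠ a0 := by simp [a0, a1]
  let ρ : Word n r := (c0, [a0])
  let γ : Word n r := (c0, [a1])
  have hγρ : ∀ u, ∃ M, Ev h M ((c0, a0 :: u) : Word n r) γ := fun u =>
    ev_of_disjoint hn0 hr hc _ _ (disjoint_cones _ _ _ _ _ _ (by simp [h01.symm]))
  have hργ : ∃ M, Ev h M γ ρ :=
    ev_of_disjoint hn0 hr hc _ _ (disjoint_cones _ _ _ _ _ _ (by simp [h01]))
  have hA : ∀ b : Fin n, ∃ M, Ev h M ((c0, [a0, b]) : Word n r) ρ := fun b =>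
    ev_trans hn0 (hγρ [b]) hργ
  have hB : ∀ t : Fin r × Fin n, ∃ M, Ev h M ((t.1, [t.2]) : Word n r) ρ := by
    intro t
    by_cases ht : t = (c0, a0)
    · subst ht
      exact ev_trans hn0 (hγρ []) hργ
    · exact ev_of_disjoint hn0 hr hc _ _ (disjoint_cones _ _ _ _ _ _ ht)
  choose MA hMA using hA
  choose MB hMB using hB
  set M := max (Finset.univ.sup MA) (Finset.univ.sup MB) with hM
  have hA' : ∀ b, Ev h M ((c0, [a0, b]) : Word n r) ρ := fun b =>
    (hMA b).mono ((Finset.le_sup (Finset.mem_univ b)).trans (le_max_left _ _))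
  have hB' : ∀ t : Fin r × Fin n, Ev h M ((t.1, [t.2]) : Word n r) ρ := fun t =>
    (hMB t).mono ((Finset.le_sup (Finset.mem_univ t)).trans (le_max_right _ _))
  have main : ∀ (c : Fin r) (a : Fin n) (u : List (Fin n)),
      Ev h M ((c, a :: u) : Word n r) ρ := by
    intro c a u
    induction u using List.reverseRecOn with
    | nil => exact hB' (c, a)
    | append_singleton u b ih =>
      intro w hw
      have e1 := ih (b :: w) (by simp; omega)
      have e2 := hA' b w hw
      have e3 : wApp ((c, a :: (u ++ [b])) : Word n r) w = wApp (c, a :: u) (b :: w) := by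
        simp [wApp]
      have e4 : wApp ((c0, [a0, b]) : Word n r) w = wApp ρ (b :: w) := by simp [wApp, ρ]
      rw [e3]
      rw [e4] at e2
      exact e1.trans hn0 e2
  refine ⟨M + 1, fun w hw => ?_⟩
  obtain ⟨b, w, rfl⟩ : ∃ b v, w = b :: v := by
    cases w with
    | nil => simp at hw
    | cons b v => exact ⟨b, v, rfl⟩
  have hw' : M ≤ w.length := by simp at hw; omega
  have all : ∀ ν : Word n r, SameFashion h (wApp ν (b :: w)) (wApp ρ w) := by
    rintro ⟨c, u⟩
    have e : wApp ((c, u) : Word n r) (b :: w) = wApp (c, u ++ [b]) w := by simp [wApp]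
    rw [e]
    cases u with
    | nil => exact main c b [] w hw'
    | cons a u => exact main c a (u ++ [b]) w hw'
  exact fun ν η => (all ν).trans hn0 (all η).symm

lemma SyncAt.succ {n r : ℕ} {h : Homeo n r} {m : ℕ} (hs : SyncAt h m) (k : ℕ) :
    SyncAt h (k + m) := by
  intro w hw ν η
  have e : ∀ μ : Word n r, wApp μ w = wApp (wApp μ (w.take k)) (w.drop k) := fun μ => by
    rw [wApp_wApp, List.take_append_drop]
  rw [e ν, e η]
  exact hs _ (by simp [hw]) _ _

lemma conjH_symm_conjH {n r : ℕ} (h g : Homeo n r) : conjH h.symm (conjH h g) = g := by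
  ext p : 1
  simp [conjH]

lemma conjH_conjH_symm {n r : ℕ} (h g : Homeo n r) : conjH h (conjH h.symm g) = g := by
  ext p : 1
  simp [conjH]

/-- `h⁻¹ G_{n,r} h = G_{n,r}` iff `h` is bi-synchronizing:
there is `m` such that for every word `w` of length `m` and all words `ν`, `η`,
both `h` and `h⁻¹` act in the same fashion on `U_{ν⌢w}` and `U_{η⌢w}`. -/
theorem bisynchronizing_characterisation (n r : ℕ) (hn : 2 ≤ n) (hr1 : 1 ≤ r)
    (hrn : r < n) (h : Homeo n r) :
    conjH h '' higmanSet n r = higmanSet n r ↔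
      ∃ m : ℕ, ∀ w : List (Fin n), w.length = m → ∀ ν η : Word n r,
        SameFashion h (wApp ν w) (wApp η w) ∧
        SameFashion h.symm (wApp ν w) (wApp η w) := by
  have hn0 : 0 < n := by omega
  constructor
  · intro H
    have hc : ∀ g, IsHigman g → IsHigman (conjH h g) := by
      intro g hg
      have : conjH h g ∈ higmanSet n r := H ▸ Set.mem_image_of_mem _ hg
      exact this
    have hc' : ∀ g, IsHigman g → IsHigman (conjH h.symm g) := by
      intro g hg
      have : g ∈ conjH h '' higmanSet n r := by rw [H]; exact hg
      obtain ⟨g', hg', rfl⟩ := this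
      rw [conjH_symm_conjH]
      exact hg'
    obtain ⟨m, hm⟩ := exists_sync hn hr1 hc
    obtain ⟨m', hm'⟩ := exists_sync hn hr1 hc'
    refine ⟨m + m', fun w hw ν η => ⟨?_, hm'.succ m w hw ν η⟩⟩
    exact hm.succ m' w (by omega) ν η
  · rintro ⟨m, hm⟩
    have hs : SyncAt h m := fun w hw ν η => (hm w hw ν η).1
    have hs' : SyncAt h.symm m := fun w hw ν η => (hm w hw ν η).2
    apply Set.Subset.antisymm
    · rintro _ ⟨g, hg, rfl⟩
      exact hs.conj hn0 hr1 hg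
    · intro g hg
      exact ⟨conjH h.symm g, hs'.conj hn0 hr1 hg, conjH_conjH_symm h g⟩

end HigmanAut
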